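/- arXiv:2012.06341 — 2 statements merged into one kernel-verified Lean document; each statement's English description precedes it below -/
import Mathlib

section
/- Let Φ be a real T×m matrix with full row rank (rank Φ = T, so T ≤ m) and let y ∈ ℝ^T. Define V(θ) = (1/2)‖Φθ − y‖² and the gradient-descent iteration θ^{i+1} = θ^i − γ Φᵀ(Φθ^i − y) with initialization θ^0 lying in the row space of Φ (the range of Φᵀ). Let θ̂ denote the minimum Euclidean-norm minimizer of V. Then there exists γ̃ > 0 such that for every step size γ ∈ (0, γ̃), the iterates θ^i converge to θ̂ as i → ∞. -/
open Matrix Filter Topology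

/-- Euclidean norm on `Fin n → ℝ`. -/
noncomputable def euclNorm {n : ℕ} (v : Fin n → ℝ) : ℝ := Real.sqrt (∑ i, (v i) ^ 2)

theorem aux_bound {a b : ℕ} (A : Matrix (Fin a) (Fin b) ℝ) :
    ∃ C > (0 : ℝ), ∀ v : Fin b → ℝ, (A *ᵥ v) ⬝ᵥ (A *ᵥ v) ≤ C * (v ⬝ᵥ v) := by
  refine ⟨∑ i, ∑ j, A i j ^ 2 + 1, by positivity, fun v => ?_⟩
  have h : (A *ᵥ v) ⬝ᵥ (A *ᵥ v) ≤ (∑ i, ∑ j, A i j ^ 2) * (v ⬝ᵥ v) := by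
    rw [Finset.sum_mul]
    refine Finset.sum_le_sum fun i _ => ?_
    have := Finset.sum_mul_sq_le_sq_mul_sq Finset.univ (fun j => A i j) v
    simp only [Matrix.mulVec, dotProduct] at this ⊢
    simpa only [← pow_two] using this
  have h0 : 0 ≤ v ⬝ᵥ v := Finset.sum_nonneg fun i _ => mul_self_nonneg _
  linarith

theorem aux_sq {n : ℕ} (v : Fin n → ℝ) : euclNorm v ^ 2 = v ⬝ᵥ v := by
  unfold euclNorm
  rw [Real.sq_sqrt (Finset.sum_nonneg fun i _ => sq_nonneg _)]
  simp only [dotProduct, pow_two]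

theorem aux_nonneg {n : ℕ} (v : Fin n → ℝ) : 0 ≤ v ⬝ᵥ v :=
  Finset.sum_nonneg fun i _ => mul_self_nonneg _

theorem aux_adj {a b : ℕ} (A : Matrix (Fin a) (Fin b) ℝ) (v : Fin b → ℝ) (w : Fin a → ℝ) :
    v ⬝ᵥ (Aᵀ *ᵥ w) = (A *ᵥ v) ⬝ᵥ w := by
  rw [Matrix.dotProduct_mulVec, Matrix.vecMul_transpose]

theorem aux_unit {T m : ℕ} (Φ : Matrix (Fin T) (Fin m) ℝ) (hrank : Φ.rank = T) :
    IsUnit (Φ * Φᵀ) := by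
  rw [← Matrix.mulVec_surjective_iff_isUnit]
  have h : (Φ * Φᵀ).rank = T := by rw [Matrix.rank_self_mul_transpose, hrank]
  have h2 : LinearMap.range (Φ * Φᵀ).mulVecLin = ⊤ := by
    apply Submodule.eq_top_of_finrank_eq
    rw [Matrix.rank] at h
    rw [h]; simp
  intro x
  obtain ⟨z, hz⟩ := LinearMap.range_eq_top.1 h2 x
  exact ⟨z, hz⟩

/-- Gradient descent on `V θ = (1/2)‖Φθ − y‖²`, initialized in the row space of `Φ`
(the range of `Φᵀ`), converges to the minimum Euclidean-norm minimizer of `V`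
for all sufficiently small step sizes, provided `Φ` has full row rank. -/
theorem gradient_descent_tendsto_min_norm_minimizer
    (T m : ℕ) (Φ : Matrix (Fin T) (Fin m) ℝ) (y : Fin T → ℝ)
    (hrank : Φ.rank = T)
    (V : (Fin m → ℝ) → ℝ)
    (hV : ∀ θ, V θ = (1 / 2) * euclNorm (Φ.mulVec θ - y) ^ 2)
    (θhat : Fin m → ℝ)
    (hmin : ∀ θ, V θhat ≤ V θ)
    (hminnorm : ∀ θ, (∀ θ', V θ ≤ V θ') → euclNorm θhat ≤ euclNorm θ) :
    ∃ γtilde > (0 : ℝ), ∀ γ : ℝ, 0 < γ → γ < γtilde →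
      ∀ θ : ℕ → (Fin m → ℝ),
        θ 0 ∈ Set.range Φᵀ.mulVec →
        (∀ i, θ (i + 1) = θ i - γ • Φᵀ.mulVec (Φ.mulVec (θ i) - y)) →
        Tendsto θ atTop (𝓝 θhat) := by
  have hu := aux_unit Φ hrank
  obtain ⟨L, hL, hLb⟩ := aux_bound Φᵀ
  obtain ⟨C, hC, hCb⟩ := aux_bound (Φ * Φᵀ)⁻¹
  obtain ⟨zs, hzs⟩ := (Matrix.mulVec_surjective_iff_isUnit.2 hu) y
  have hVd : ∀ θ, V θ = (1 / 2) * ((Φ *ᵥ θ - y) ⬝ᵥ (Φ *ᵥ θ - y)) := fun θ => by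
    rw [hV, ← aux_sq]
  have hy : Φ *ᵥ (Φᵀ *ᵥ zs) = y := by rw [Matrix.mulVec_mulVec]; exact hzs
  have hV0 : V (Φᵀ *ᵥ zs) = 0 := by rw [hVd, hy]; simp
  have hVnn : ∀ θ, 0 ≤ V θ := fun θ => by
    rw [hVd]; have := aux_nonneg (Φ *ᵥ θ - y); linarith
  have hhat : Φ *ᵥ θhat = y := by
    have h1 := hmin (Φᵀ *ᵥ zs)
    rw [hV0, hVd] at h1
    have h2 := aux_nonneg (Φ *ᵥ θhat - y)
    exact sub_eq_zero.1 (dotProduct_self_eq_zero.1 (by linarith))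
  have heq : θhat = Φᵀ *ᵥ zs := by
    have h1 := hminnorm (Φᵀ *ᵥ zs) (fun θ' => by rw [hV0]; exact hVnn θ')
    have h2 : euclNorm θhat ^ 2 ≤ euclNorm (Φᵀ *ᵥ zs) ^ 2 :=
      pow_le_pow_left₀ (Real.sqrt_nonneg _) h1 2
    rw [aux_sq, aux_sq] at h2
    obtain ⟨d, hd⟩ : ∃ d, d = θhat - Φᵀ *ᵥ zs := ⟨_, rfl⟩
    have hth : θhat = Φᵀ *ᵥ zs + d := by rw [hd]; abel
    have hd0 : Φ *ᵥ d = 0 := by rw [hd, Matrix.mulVec_sub, hhat, hy, sub_self]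
    have h3 : d ⬝ᵥ (Φᵀ *ᵥ zs) = 0 := by rw [aux_adj, hd0, zero_dotProduct]
    rw [hth, add_dotProduct, dotProduct_add, dotProduct_add, h3,
      dotProduct_comm _ d, h3] at h2
    have h4 := aux_nonneg d
    have h5 : d = 0 := dotProduct_self_eq_zero.1 (by linarith)
    rw [hth, h5, add_zero]
  -- lower bound on the row space
  have hlow : ∀ w : Fin T → ℝ, (Φᵀ *ᵥ w) ⬝ᵥ (Φᵀ *ᵥ w) ≤
      (L * C) * ((Φ *ᵥ (Φᵀ *ᵥ w)) ⬝ᵥ (Φ *ᵥ (Φᵀ *ᵥ w))) := fun w => by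
    have h1 := hCb ((Φ * Φᵀ) *ᵥ w)
    rw [Matrix.mulVec_mulVec, Matrix.nonsing_inv_mul _ ((Matrix.isUnit_iff_isUnit_det _).1 hu),
      Matrix.one_mulVec, ← Matrix.mulVec_mulVec] at h1
    calc _ ≤ L * (w ⬝ᵥ w) := hLb w
      _ ≤ L * (C * _) := mul_le_mul_of_nonneg_left h1 hL.le
      _ = _ := by ring
  have hM : 0 < L * C := mul_pos hL hC
  refine ⟨min (1 / L) (L * C), lt_min (by positivity) hM, fun γ hγ hγt θ h0 hstep => ?_⟩
  have hγL : γ * L < 1 := by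
    have := lt_of_lt_of_le hγt (min_le_left _ _)
    rwa [lt_div_iff₀ hL] at this
  have hγM : γ < L * C := lt_of_lt_of_le hγt (min_le_right _ _)
  have hrow : ∀ i, ∃ w, θ i - θhat = Φᵀ *ᵥ w := by
    intro i
    induction i with
    | zero =>
      obtain ⟨z, hz⟩ := h0
      exact ⟨z - zs, by rw [Matrix.mulVec_sub, heq, ← hz]⟩
    | succ i ih =>
      obtain ⟨w, hw⟩ := ih
      refine ⟨w - γ • (Φ *ᵥ θ i - y), ?_⟩
      rw [Matrix.mulVec_sub, Matrix.mulVec_smul, ← hw, hstep]; abel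
  set E : ℕ → ℝ := fun i => (θ i - θhat) ⬝ᵥ (θ i - θhat) with hE
  have hdec : ∀ i, E (i + 1) ≤ (1 - γ / (L * C)) * E i := by
    intro i
    obtain ⟨w, hw⟩ := hrow i
    obtain ⟨e, he⟩ : ∃ e, e = θ i - θhat := ⟨_, rfl⟩
    have hΦe : Φ *ᵥ θ i - y = Φ *ᵥ e := by rw [he, Matrix.mulVec_sub, hhat]
    have hs : θ (i + 1) - θhat = e - γ • (Φᵀ *ᵥ (Φ *ᵥ e)) := by
      rw [hstep, hΦe, he]; abel
    have hl := hlow w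
    rw [← hw, ← he] at hl
    have hb := hLb (Φ *ᵥ e)
    have hn := aux_nonneg (Φ *ᵥ e)
    simp only [hE]
    rw [hs, ← he, sub_dotProduct, dotProduct_sub, dotProduct_sub, smul_dotProduct,
      smul_dotProduct, dotProduct_smul, dotProduct_smul, dotProduct_comm (Φᵀ *ᵥ (Φ *ᵥ e)) e,
      aux_adj]
    simp only [smul_eq_mul]
    generalize (Φᵀ *ᵥ (Φ *ᵥ e)) ⬝ᵥ (Φᵀ *ᵥ (Φ *ᵥ e)) = p at *
    generalize (Φ *ᵥ e) ⬝ᵥ (Φ *ᵥ e) = q at *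
    generalize e ⬝ᵥ e = r at *
    have h1 : γ * (γ * p) ≤ γ * q := by
      apply mul_le_mul_of_nonneg_left _ hγ.le
      nlinarith
    have h2 : γ / (L * C) * r ≤ γ * q := by
      rw [div_mul_eq_mul_div, div_le_iff₀ hM]
      nlinarith
    linarith
  have hr0 : 0 ≤ 1 - γ / (L * C) := by
    have := (div_lt_one hM).2 hγM
    linarith
  have hr1 : 1 - γ / (L * C) < 1 := by
    have := div_pos hγ hM
    linarith
  have hgeo : ∀ i, E i ≤ (1 - γ / (L * C)) ^ i * E 0 := by
    intro i
    induction i with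
    | zero => simp
    | succ i ih =>
      calc _ ≤ _ := hdec i
        _ ≤ _ := mul_le_mul_of_nonneg_left ih hr0
        _ = _ := by ring
  have hE0 : Tendsto E atTop (𝓝 0) := by
    refine squeeze_zero (fun i => aux_nonneg _) hgeo ?_
    simpa using (tendsto_pow_atTop_nhds_zero_of_lt_one hr0 hr1).mul_const (E 0)
  rw [tendsto_pi_nhds]
  intro j
  rw [tendsto_iff_norm_sub_tendsto_zero]
  have hs : Tendsto (fun i => Real.sqrt (E i)) atTop (𝓝 0) := by
    simpa using hE0.sqrt
  refine squeeze_zero (fun i => norm_nonneg _) (fun i => ?_) hs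
  rw [Real.norm_eq_abs]
  apply Real.abs_le_sqrt
  rw [pow_two]
  exact Finset.single_le_sum (f := fun j => (θ i - θhat) j * (θ i - θhat) j)
    (fun j _ => mul_self_nonneg _) (Finset.mem_univ j)
end

section
/- Let γ > 0, let w ∈ ℝ^n be a random vector with independent N(0, 2γ) coordinates, and let b be an independent random variable uniform on [0, 2π). Then for all x, x' ∈ ℝ^n, E[2·cos(wᵀx + b)·cos(wᵀx' + b)] = exp(−γ‖x − x'‖²). That is, the random Fourier feature pairing is an unbiased estimator of the Gaussian kernel K(x, x') = exp(−γ‖x − x'‖²). -/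
open Matrix MeasureTheory ProbabilityTheory Real


lemma rff_inner (A B : ℝ) :
    ∫ b, 2 * Real.cos (A + b) * Real.cos (B + b)
      ∂((ENNReal.ofReal (2 * π))⁻¹ • volume.restrict (Set.Ico (0 : ℝ) (2 * π)))
      = Real.cos (A - B) := by
  have hpi := Real.pi_pos
  rw [integral_smul_measure, integral_Ico_eq_integral_Ioc,
    ← intervalIntegral.integral_of_le (by positivity)]
  have h : ∫ b in (0:ℝ)..(2 * π), 2 * Real.cos (A + b) * Real.cos (B + b)
      = ((2 * π) * Real.cos (A - B) + Real.sin (A + B + 2 * (2 * π)) / 2)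
        - (0 * Real.cos (A - B) + Real.sin (A + B + 2 * 0) / 2) := by
    refine intervalIntegral.integral_eq_sub_of_hasDerivAt
      (f := fun b => b * Real.cos (A - B) + Real.sin (A + B + 2 * b) / 2) ?_ ?_
    · intro b _
      have h1 : HasDerivAt (fun b : ℝ => A + B + 2 * b) 2 b := by
        simpa using ((hasDerivAt_id b).const_mul 2).const_add (A + B)
      have h2 := ((hasDerivAt_id b).mul_const (Real.cos (A - B))).add (h1.sin.div_const 2)
      refine h2.congr_deriv ?_
      have e1 : A - B = (A + b) - (B + b) := by ring
      have e2 : A + B + 2 * b = (A + b) + (B + b) := by ring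
      rw [e1, e2, Real.cos_sub (A + b), Real.cos_add (A + b) (B + b)]
      ring
    · exact Continuous.intervalIntegrable (by fun_prop) _ _
  have e : A + B + 2 * (2 * π) = A + B + 2 * π + 2 * π := by ring
  rw [h, e, Real.sin_add_two_pi, Real.sin_add_two_pi, ENNReal.toReal_inv,
    ENNReal.toReal_ofReal (by positivity), smul_eq_mul]
  simp only [mul_zero, add_zero, zero_mul, zero_add]
  field_simp
  ring

lemma rff_outer (n : ℕ) (γ : ℝ) (hγ : 0 < γ) (d : Fin n → ℝ) :
    ∫ w : Fin n → ℝ, Real.cos (w ⬝ᵥ d)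
      ∂(Measure.pi fun _ : Fin n => gaussianReal 0 (Real.toNNReal (2 * γ)))
      = Real.exp (-γ * ∑ j, d j ^ 2) := by
  have key : ∫ w : Fin n → ℝ, Complex.exp ((w ⬝ᵥ d : ℝ) * Complex.I)
      ∂(Measure.pi fun _ : Fin n => gaussianReal 0 (Real.toNNReal (2 * γ)))
      = (Real.exp (-γ * ∑ j, d j ^ 2) : ℝ) := by
    have e : ∀ w : Fin n → ℝ, Complex.exp ((w ⬝ᵥ d : ℝ) * Complex.I)
        = ∏ j, Complex.exp (d j * w j * Complex.I) := by
      intro w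
      rw [← Complex.exp_sum, ← Finset.sum_mul]
      congr 2
      simp [dotProduct, mul_comm]
    simp_rw [e]
    rw [integral_fintype_prod_eq_prod (𝕜 := ℂ)
      (f := fun j (y : ℝ) => Complex.exp (d j * y * Complex.I))]
    simp_rw [← charFun_apply_real, charFun_gaussianReal]
    rw [← Complex.exp_sum, Complex.ofReal_exp]
    congr 1
    push_cast
    rw [Finset.mul_sum]
    refine Finset.sum_congr rfl fun j _ => ?_
    rw [Real.coe_toNNReal _ (by positivity)]
    push_cast
    ring
  have hint : Integrable (fun w : Fin n → ℝ => Complex.exp ((w ⬝ᵥ d : ℝ) * Complex.I))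
      (Measure.pi fun _ : Fin n => gaussianReal 0 (Real.toNNReal (2 * γ))) := by
    refine Integrable.of_bound (C := 1) ?_ ?_
    · refine Continuous.aestronglyMeasurable ?_
      unfold dotProduct
      fun_prop
    · exact Filter.Eventually.of_forall fun w => (Complex.norm_exp_ofReal_mul_I _).le
  have h := integral_re hint
  rw [key] at h
  simp only [RCLike.re_to_complex, Complex.exp_ofReal_mul_I_re, Complex.ofReal_re] at h
  exact h

/-- Random Fourier features are unbiased estimators of the Gaussian kernel:
for `w ∼ N(0, 2γI_n)` and an independent phase `b` uniform on `[0, 2π)`,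
`E[2cos(wᵀx + b)cos(wᵀx' + b)] = exp(−γ‖x − x'‖²)`. -/
theorem random_fourier_features_unbiased_gaussian_kernel
    (n : ℕ) (γ : ℝ) (hγ : 0 < γ) (x x' : Fin n → ℝ) :
    ∫ p : (Fin n → ℝ) × ℝ,
        2 * Real.cos (p.1 ⬝ᵥ x + p.2) * Real.cos (p.1 ⬝ᵥ x' + p.2)
        ∂((Measure.pi fun _ : Fin n => gaussianReal 0 (Real.toNNReal (2 * γ))).prod
            ((ENNReal.ofReal (2 * π))⁻¹ • volume.restrict (Set.Ico (0 : ℝ) (2 * π))))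
      = Real.exp (-γ * ∑ j, (x j - x' j) ^ 2) := by
  have : IsFiniteMeasure
      ((ENNReal.ofReal (2 * π))⁻¹ • volume.restrict (Set.Ico (0 : ℝ) (2 * π))) := by
    refine Measure.smul_finite _ ?_
    have := Real.pi_pos
    simp [this]
  rw [integral_prod]
  · simp_rw [rff_inner, ← dotProduct_sub]
    exact rff_outer n γ hγ (x - x')
  · refine Integrable.of_bound (C := 2) ?_ ?_
    · refine Continuous.aestronglyMeasurable ?_
      unfold dotProduct
      fun_prop
    · refine Filter.Eventually.of_forall fun p => ?_
      rw [Real.norm_eq_abs, abs_mul, abs_mul, abs_two]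
      have h1 := Real.abs_cos_le_one (p.1 ⬝ᵥ x + p.2)
      have h2 := Real.abs_cos_le_one (p.1 ⬝ᵥ x' + p.2)
      have := mul_le_one₀ h1 (abs_nonneg _) h2
      linarith
end
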